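/- Let G and G' be bow-free acyclic path diagrams on the same finite vertex type V that are algebraically equivalent, i.e. A(G) = A(G'). Then G and G' have the same skeleton and the same v-structures. (Corollary 1 of the paper.) -/

import Mathlib

open Matrix

structure MixedGraph (V : Type*) where
  D : V → V → Prop
  B : V → V → Prop
  symm : ∀ v w, B v w → B w v
  irrefl : ∀ v, ¬ B v v

namespace MixedGraph

variable {V : Type*}

/-- The graph is acyclic: no directed cycles. -/
def Acyclic (G : MixedGraph V) : Prop := ∀ v, ¬ Relation.TransGen G.D v v

/-- The graph is simple: for distinct `v, w`, at most one of
`D v w`, `D w v`, `B v w` holds. -/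
def Simple (G : MixedGraph V) : Prop :=
  ∀ v w, v ≠ w →
    ¬ (G.D v w ∧ G.D w v) ∧ ¬ (G.D v w ∧ G.B v w) ∧ ¬ (G.D w v ∧ G.B v w)

/-- A bow-free acyclic path diagram: a simple acyclic mixed graph. -/
def IsBAP (G : MixedGraph V) : Prop := G.Acyclic ∧ G.Simple

/-- `Λ` is compatible with `G`. -/
def LamCompat (G : MixedGraph V) (Λ : Matrix V V ℝ) : Prop :=
  ∀ v w, ¬ G.D v w → Λ v w = 0

/-- `Ω` is compatible with `G`. -/
def OmCompat [Fintype V] (G : MixedGraph V) (Ω : Matrix V V ℝ) : Prop :=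
  Ω.PosDef ∧ ∀ v w, v ≠ w → ¬ G.B v w → ¬ G.B w v → Ω v w = 0

/-- The model `M(G)` of a mixed graph. -/
def model [Fintype V] [DecidableEq V] (G : MixedGraph V) : Set (Matrix V V ℝ) :=
  {S | ∃ Λ Ω : Matrix V V ℝ, G.LamCompat Λ ∧ G.OmCompat Ω ∧
    S = ((1 - Λ)⁻¹)ᵀ * Ω * (1 - Λ)⁻¹}

/-- The algebraic model `A(G)`: the real Zariski closure of `M(G)`. -/
def algModel [Fintype V] [DecidableEq V] (G : MixedGraph V) : Set (Matrix V V ℝ) :=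
  {S | ∀ p : MvPolynomial (V × V) ℝ,
    (∀ T ∈ G.model, MvPolynomial.eval (fun e => T e.1 e.2) p = 0) →
    MvPolynomial.eval (fun e => S e.1 e.2) p = 0}

/-- The skeleton (adjacency relation) of `G`. -/
def adj (G : MixedGraph V) (v w : V) : Prop :=
  v ≠ w ∧ (G.D v w ∨ G.D w v ∨ G.B v w)

/-- A collider triple of `G`. -/
def ColliderTriple (G : MixedGraph V) (u v w : V) : Prop :=
  u ≠ v ∧ v ≠ w ∧ u ≠ w ∧ (G.D u v ∨ G.B u v) ∧ (G.D w v ∨ G.B w v)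

/-- A v-structure of `G`. -/
def VStructure (G : MixedGraph V) (u v w : V) : Prop :=
  G.ColliderTriple u v w ∧ ¬ G.adj u w

end MixedGraph

/-- The functions on `X` that are rational in the coordinates `σ`, with a denominator that does
not vanish at the base point `x₀`. -/
def regularAt {X ι : Type*} (σ : X → ι → ℝ) (x₀ : X) : Subring (X → ℝ) where
  carrier := {f | ∃ p q : MvPolynomial ι ℝ, MvPolynomial.eval (σ x₀) q ≠ 0 ∧
    ∀ x, MvPolynomial.eval (σ x) q * f x = MvPolynomial.eval (σ x) p}
  mul_mem' := by
    rintro f g ⟨p, q, hq, h⟩ ⟨p', q', hq', h'⟩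
    refine ⟨p * p', q * q', by simp [hq, hq'], fun x => ?_⟩
    simp only [map_mul, Pi.mul_apply, ← h, ← h']
    ring
  one_mem' := ⟨1, 1, by simp, by simp⟩
  add_mem' := by
    rintro f g ⟨p, q, hq, h⟩ ⟨p', q', hq', h'⟩
    refine ⟨p * q' + p' * q, q * q', by simp [hq, hq'], fun x => ?_⟩
    simp only [map_mul, map_add, Pi.add_apply, ← h, ← h']
    ring
  zero_mem' := ⟨0, 1, by simp, by simp⟩
  neg_mem' := by
    rintro f ⟨p, q, hq, h⟩
    refine ⟨-p, q, hq, fun x => ?_⟩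
    simp only [map_neg, Pi.neg_apply, ← h]
    ring

section regularAt

variable {X ι : Type*} {σ : X → ι → ℝ} {x₀ : X}

lemma coord_mem_regularAt (i : ι) : (fun x => σ x i) ∈ regularAt σ x₀ :=
  ⟨MvPolynomial.X i, 1, by simp, by simp⟩

lemma mem_regularAt_of_mul_eq {a b f : X → ℝ} (ha : a ∈ regularAt σ x₀)
    (hb : b ∈ regularAt σ x₀) (ha₀ : a x₀ ≠ 0) (h : a * f = b) : f ∈ regularAt σ x₀ := by
  obtain ⟨p, q, hq, hpq⟩ := ha
  obtain ⟨p', q', hq', hpq'⟩ := hb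
  refine ⟨q * p', p * q', ?_, fun x => ?_⟩
  · simp only [map_mul, ← hpq]
    exact mul_ne_zero (mul_ne_zero hq ha₀) hq'
  · simp only [map_mul, ← hpq, ← hpq', ← h, Pi.mul_apply]
    ring

/-- Cramer's rule for regular functions. -/
lemma mem_regularAt_of_mulVec_eq {P : Type*} [Fintype P] [DecidableEq P]
    {A : Matrix P P (X → ℝ)} {b g : P → X → ℝ} (hA : ∀ i j, A i j ∈ regularAt σ x₀)
    (hb : ∀ i, b i ∈ regularAt σ x₀) (hdet : A.det x₀ ≠ 0) (h : A *ᵥ g = b) (i : P) :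
    g i ∈ regularAt σ x₀ := by
  let A' : Matrix P P (regularAt σ x₀) := fun i j => ⟨A i j, hA i j⟩
  have hAA' : (regularAt σ x₀).subtype.mapMatrix A' = A := rfl
  have hdet_mem : A.det ∈ regularAt σ x₀ := by
    rw [← hAA', ← RingHom.map_det]
    exact (A'.det).2
  have hadj_mem (i j) : A.adjugate i j ∈ regularAt σ x₀ := by
    rw [← hAA', ← RingHom.map_adjugate]
    exact (A'.adjugate i j).2
  have hcramer : A.det * g i = (A.adjugate *ᵥ b) i := by
    rw [← h, mulVec_mulVec, adjugate_mul, smul_mulVec, one_mulVec]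
    rfl
  refine mem_regularAt_of_mul_eq hdet_mem ?_ hdet hcramer
  exact sum_mem fun j _ => mul_mem (hadj_mem i j) (hb j)

lemma exists_common_denominator {κ : Type*} [Fintype κ] {f : κ → X → ℝ}
    (hf : ∀ k, f k ∈ regularAt σ x₀) :
    ∃ (q : MvPolynomial ι ℝ) (p : κ → MvPolynomial ι ℝ), MvPolynomial.eval (σ x₀) q ≠ 0 ∧
      ∀ k x, MvPolynomial.eval (σ x) q * f k x = MvPolynomial.eval (σ x) (p k) := by
  classical
  choose p q hq h using hf
  refine ⟨∏ k, q k, fun k => (∏ j ∈ Finset.univ.erase k, q j) * p k, ?_, fun k x => ?_⟩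
  · simp only [map_prod]
    exact Finset.prod_ne_zero_iff.2 fun k _ => hq k
  · rw [← Finset.prod_erase_mul _ _ (Finset.mem_univ k)]
    simp only [map_mul, ← h]
    ring

end regularAt

/-- `1 + s • W` is positive definite for all small `s`. -/
lemma posDef_one_add_smul {V : Type*} [Fintype V] [DecidableEq V] {W : Matrix V V ℝ}
    (hW : W.IsSymm) {s : ℝ} (hs : |s| * ∑ i, ∑ j, |W i j| < 1) : (1 + s • W).PosDef := by
  refine PosDef.of_dotProduct_mulVec_pos ?_ fun x hx => ?_
  · rw [IsHermitian, conjTranspose_eq_transpose_of_trivial]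
    simp [hW.eq]
  · have hpos : 0 < x ⬝ᵥ x := by simpa using dotProduct_star_self_pos_iff.2 hx
    have hsq (i : V) : x i ^ 2 ≤ x ⬝ᵥ x := by
      rw [sq]
      exact Finset.single_le_sum (f := fun i => x i * x i)
        (fun i _ => mul_self_nonneg (x i)) (Finset.mem_univ i)
    have hterm (i j : V) : |x i * (W i j * x j)| ≤ |W i j| * (x ⬝ᵥ x) := by
      have : |x i| * |x j| ≤ x ⬝ᵥ x := by
        nlinarith [hsq i, hsq j, sq_nonneg (|x i| - |x j|), sq_abs (x i), sq_abs (x j)]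
      calc |x i * (W i j * x j)| = |W i j| * (|x i| * |x j|) := by
            simp only [abs_mul]; ring
        _ ≤ _ := by gcongr
    have hbound : |x ⬝ᵥ W *ᵥ x| ≤ (∑ i, ∑ j, |W i j|) * (x ⬝ᵥ x) := by
      have hsum : x ⬝ᵥ W *ᵥ x = ∑ i, ∑ j, x i * (W i j * x j) := by
        simp only [dotProduct, mulVec, Finset.mul_sum]
      rw [hsum, Finset.sum_mul]
      refine (Finset.abs_sum_le_sum_abs _ _).trans (Finset.sum_le_sum fun i _ => ?_)
      rw [Finset.sum_mul]
      exact (Finset.abs_sum_le_sum_abs _ _).trans (Finset.sum_le_sum fun j _ => hterm i j)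
    have hlow : -(|s| * ((∑ i, ∑ j, |W i j|) * (x ⬝ᵥ x))) ≤ s * (x ⬝ᵥ W *ᵥ x) := by
      refine (neg_le_neg ?_).trans (neg_abs_le _)
      rw [abs_mul]
      gcongr
    have : star x ⬝ᵥ (1 + s • W) *ᵥ x = x ⬝ᵥ x + s * (x ⬝ᵥ W *ᵥ x) := by
      simp [add_mulVec, smul_mulVec, dotProduct_add, dotProduct_smul]
    rw [this]
    nlinarith

namespace MixedGraph

variable {V : Type*} {G : MixedGraph V}

lemma Acyclic.wellFounded [Finite V] (hG : G.Acyclic) : WellFounded G.D := by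
  have : Std.Irrefl (Relation.TransGen G.D) := ⟨hG⟩
  exact Subrelation.wf (fun h => Relation.TransGen.single h)
    (Finite.wellFounded_of_trans_of_irrefl (Relation.TransGen G.D))

lemma Acyclic.not_D_self (hG : G.Acyclic) (v : V) : ¬ G.D v v :=
  fun h => hG v (.single h)

lemma Acyclic.ne_of_D (hG : G.Acyclic) {v w : V} (h : G.D v w) : v ≠ w := by
  rintro rfl
  exact hG.not_D_self v h

lemma IsBAP.not_D_of_D (hG : G.IsBAP) {v w : V} (h : G.D v w) : ¬ G.D w v :=
  fun h' => (hG.2 v w (hG.1.ne_of_D h)).1 ⟨h, h'⟩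

lemma IsBAP.not_B_of_D (hG : G.IsBAP) {v w : V} (h : G.D v w) : ¬ G.B v w :=
  fun h' => (hG.2 v w (hG.1.ne_of_D h)).2.1 ⟨h, h'⟩

lemma adj_comm {v w : V} : G.adj v w ↔ G.adj w v := by
  have : G.B v w ↔ G.B w v := ⟨G.symm _ _, G.symm _ _⟩
  simp only [adj, this, ne_comm]
  tauto

variable [Fintype V] [DecidableEq V]

lemma Acyclic.isUnit_det_one_sub (hG : G.Acyclic) {Λ : Matrix V V ℝ} (hΛ : G.LamCompat Λ) :
    IsUnit (1 - Λ).det := by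
  rw [isUnit_iff_ne_zero]
  intro hdet
  obtain ⟨x, hx, hx0⟩ := exists_vecMul_eq_zero_iff.2 hdet
  refine hx (funext fun w => ?_)
  induction w using hG.wellFounded.induction with
  | _ w ih =>
    have hw := congrFun hx0 w
    rw [vecMul_sub, vecMul_one, Pi.sub_apply, Pi.zero_apply, sub_eq_zero] at hw
    rw [hw]
    refine Finset.sum_eq_zero fun u _ => ?_
    by_cases hu : G.D u w
    · simp [ih u hu]
    · simp [hΛ u w hu]

/-- The compatible parameter pairs of `G`. -/
def Params (G : MixedGraph V) : Type _ :=
  {x : Matrix V V ℝ × Matrix V V ℝ // G.LamCompat x.1 ∧ G.OmCompat x.2}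

/-- The covariance matrix of a parameter pair. -/
noncomputable def Params.cov (x : G.Params) : Matrix V V ℝ :=
  ((1 - x.1.1)⁻¹)ᵀ * x.1.2 * (1 - x.1.1)⁻¹

/-- The parameter pair `(0, 1)`. -/
def Params.base (G : MixedGraph V) : G.Params :=
  ⟨(0, 1), fun _ _ _ => rfl, PosDef.one, fun _ _ h _ _ => one_apply_ne h⟩

lemma Params.cov_base : (Params.base G).cov = 1 := by
  simp [Params.cov, Params.base]

lemma Params.cov_relation (hG : G.Acyclic) (x : G.Params) :
    (1 - x.1.1)ᵀ * x.cov * (1 - x.1.1) = x.1.2 := by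
  have hu := hG.isUnit_det_one_sub x.2.1
  have h1 : (1 - x.1.1)⁻¹ * (1 - x.1.1) = 1 := nonsing_inv_mul _ hu
  have h2 : (1 - x.1.1)ᵀ * ((1 - x.1.1)⁻¹)ᵀ = 1 := by
    rw [← transpose_mul, h1, transpose_one]
  calc (1 - x.1.1)ᵀ * x.cov * (1 - x.1.1)
      = ((1 - x.1.1)ᵀ * ((1 - x.1.1)⁻¹)ᵀ) * x.1.2 * ((1 - x.1.1)⁻¹ * (1 - x.1.1)) := by
        simp only [Params.cov, Matrix.mul_assoc]
    _ = x.1.2 := by rw [h1, h2, Matrix.one_mul, Matrix.mul_one]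

/-- Near the identity matrix, the edge coefficients of a bow-free acyclic path diagram are
rational functions of the covariance matrix. -/
lemma IsBAP.coeff_mem_regularAt (hG : G.IsBAP) (v : V) : ∀ u,
    (fun x : G.Params => x.1.1 u v) ∈
      regularAt (fun (x : G.Params) (e : V × V) => x.cov e.1 e.2) (Params.base G) := by
  classical
  induction v using hG.1.wellFounded.induction with
  | _ v ih =>
    intro u
    by_cases huv : G.D u v
    swap
    · rw [show (fun x : G.Params => x.1.1 u v) = 0 from funext fun x => x.2.1 u v huv]
      exact zero_mem _
    let K (u y : V) : G.Params → ℝ := fun x =>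
      ((1 - x.1.1)ᵀ * x.cov : Matrix V V ℝ) u y
    have hK (u y : V) (hu : G.D u v) : K u y ∈
        regularAt (fun (x : G.Params) (e : V × V) => x.cov e.1 e.2) (Params.base G) := by
      have : K u y = ∑ z, ((1 : Matrix V V (G.Params → ℝ)) z u - fun x => x.1.1 z u) *
          (fun x => x.cov z y) := by
        ext x
        simp only [K, mul_apply, transpose_apply, Matrix.sub_apply, Finset.sum_apply, Pi.mul_apply,
          Pi.sub_apply, one_apply]
        refine Finset.sum_congr rfl fun z _ => ?_
        split_ifs <;> rfl
      rw [this]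
      refine sum_mem fun z _ => mul_mem (sub_mem ?_ (ih u hu z)) ?_
      · rw [one_apply]
        split_ifs
        exacts [one_mem _, zero_mem _]
      · exact coord_mem_regularAt (σ := fun (x : G.Params) (e : V × V) => x.cov e.1 e.2) (z, y)
    refine mem_regularAt_of_mulVec_eq (P := {u // G.D u v}) (A := of fun i j => K i j)
      (b := fun i => K i v) (g := fun i x => x.1.1 i v) (fun i j => hK _ _ i.2)
      (fun i => hK _ _ i.2) ?_ ?_ ⟨u, huv⟩
    · have : (Pi.evalRingHom (fun _ => ℝ) (Params.base G)).mapMatrix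
          (of fun i j : {u // G.D u v} => K i j) = 1 := by
        ext i j
        simp only [RingHom.mapMatrix_apply, map_apply, of_apply, Pi.evalRingHom_apply, K,
          Params.cov_base]
        simp [one_apply, Subtype.ext_iff, Params.base]
      have h := congrArg det this
      rw [← RingHom.map_det, det_one] at h
      exact ne_of_eq_of_ne h one_ne_zero
    · ext i x
      have hzero : ((1 - x.1.1)ᵀ * x.cov * (1 - x.1.1) : Matrix V V ℝ) i v = 0 := by
        rw [Params.cov_relation hG.1]
        have hB := hG.not_B_of_D i.2
        exact x.2.2.2 _ _ (hG.1.ne_of_D i.2) hB fun h => hB (G.symm _ _ h)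
      rw [Matrix.mul_sub, Matrix.mul_one, Matrix.sub_apply, sub_eq_zero] at hzero
      simp only [mulVec, dotProduct, Finset.sum_apply, Pi.mul_apply, of_apply]
      refine Eq.trans ?_ hzero.symm
      change _ = ∑ y, K i y x * x.1.1 y v
      rw [← Finset.sum_subtype (Finset.univ.filter fun y => G.D y v) (by simp)
        (fun y => K i y x * x.1.1 y v)]
      refine Finset.sum_filter_of_ne fun y _ hy => ?_
      by_contra hD
      exact hy (by rw [x.2.1 y v hD, mul_zero])

/-- The defining relations of the model near the identity matrix, with denominators cleared. -/
lemma IsBAP.exists_constraints (hG : G.IsBAP) :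
    ∃ (Q : MvPolynomial (V × V) ℝ) (P : Matrix V V (MvPolynomial (V × V) ℝ)),
      MvPolynomial.eval (fun e => (1 : Matrix V V ℝ) e.1 e.2) Q ≠ 0 ∧
      (∀ u v, MvPolynomial.eval (fun e => (1 : Matrix V V ℝ) e.1 e.2) (P u v) = 0) ∧
      (∀ u v, ¬ G.D u v → P u v = 0) ∧
      ∀ v w, v ≠ w → ¬ G.B v w → ∀ T ∈ G.model, MvPolynomial.eval (fun e : V × V => T e.1 e.2)
        (((Q • 1 - P)ᵀ * mvPolynomialX V V ℝ * (Q • 1 - P) :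
          Matrix V V (MvPolynomial (V × V) ℝ)) v w) = 0 := by
  classical
  obtain ⟨Q, p, hQ, hp⟩ := exists_common_denominator
    (f := fun (e : V × V) (x : G.Params) => x.1.1 e.1 e.2)
    fun e => hG.coeff_mem_regularAt e.2 e.1
  rw [Params.cov_base] at hQ
  let P : Matrix V V (MvPolynomial (V × V) ℝ) := of fun u v => if G.D u v then p (u, v) else 0
  have hP (u v : V) (x : G.Params) :
      MvPolynomial.eval (fun e => x.cov e.1 e.2) (P u v) =
        MvPolynomial.eval (fun e => x.cov e.1 e.2) Q * x.1.1 u v := by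
    by_cases h : G.D u v
    · simp [P, h, hp (u, v) x]
    · simp [P, h, x.2.1 u v h]
  refine ⟨Q, P, hQ, fun u v => ?_, fun u v h => by simp [P, h], ?_⟩
  · have := hP u v (Params.base G)
    rw [Params.cov_base] at this
    simp [this, Params.base]
  · rintro v w hvw hB T ⟨Λ, Ω, hΛ, hΩ, hT⟩
    let x : G.Params := ⟨(Λ, Ω), hΛ, hΩ⟩
    obtain rfl : T = x.cov := hT
    let φ := MvPolynomial.eval (fun e : V × V => x.cov e.1 e.2)
    have hN : φ.mapMatrix (Q • 1 - P) = φ Q • (1 - Λ) := by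
      ext i j
      have := hP i j x
      simp only [φ, x, RingHom.mapMatrix_apply, map_apply, Matrix.sub_apply, Matrix.smul_apply,
        smul_eq_mul, map_sub, map_mul, this, one_apply, mul_sub]
      split_ifs <;> simp
    have hX : φ.mapMatrix (mvPolynomialX V V ℝ) = x.cov := by
      ext i j
      simp [φ]
    have hNT : φ.mapMatrix (Q • 1 - P)ᵀ = (φ.mapMatrix (Q • 1 - P))ᵀ := rfl
    change φ.mapMatrix ((Q • 1 - P)ᵀ * mvPolynomialX V V ℝ * (Q • 1 - P)) v w = 0
    rw [map_mul, map_mul, hNT, hN, hX, transpose_smul, Matrix.smul_mul, Matrix.smul_mul,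
      Matrix.mul_smul, Params.cov_relation hG.1 x]
    have : Ω v w = 0 := hΩ.2 v w hvw hB fun h => hB (G.symm _ _ h)
    simp [x, this]

/-- A polynomial curve through the identity matrix inside the algebraic model lifts to a formal
curve of parameters. -/
lemma IsBAP.exists_formal_lift (hG : G.IsBAP) {S : Matrix V V (Polynomial ℝ)}
    (hS₀ : S.map (Polynomial.eval 0) = 1)
    (hS : {s : ℝ | S.map (Polynomial.eval s) ∈ G.algModel}.Infinite) :
    ∃ Λ : Matrix V V (PowerSeries ℝ), Λ.map (PowerSeries.coeff 0) = 0 ∧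
      (∀ u v, ¬ G.D u v → Λ u v = 0) ∧
      ∀ v w, v ≠ w → ¬ G.B v w →
        ((1 - Λ)ᵀ * Polynomial.coeToPowerSeries.ringHom.mapMatrix S * (1 - Λ) :
          Matrix V V (PowerSeries ℝ)) v w = 0 := by
  obtain ⟨Q, P, hQ, hP₀, hPD, hrel⟩ := hG.exists_constraints
  let σ : MvPolynomial (V × V) ℝ →+* Polynomial ℝ :=
    (MvPolynomial.aeval fun e : V × V => S e.1 e.2).toRingHom
  have hσ (s : ℝ) (p : MvPolynomial (V × V) ℝ) : (σ p).eval s =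
      MvPolynomial.eval (fun e => S.map (Polynomial.eval s) e.1 e.2) p := by
    have : (Polynomial.evalRingHom s).comp σ =
        MvPolynomial.eval (fun e => S.map (Polynomial.eval s) e.1 e.2) := by
      ext <;> simp [σ]
    exact RingHom.congr_fun this p
  let ψ : MvPolynomial (V × V) ℝ →+* PowerSeries ℝ :=
    Polynomial.coeToPowerSeries.ringHom.comp σ
  have hψ₀ (p : MvPolynomial (V × V) ℝ) : PowerSeries.constantCoeff (ψ p) =
      MvPolynomial.eval (fun e => (1 : Matrix V V ℝ) e.1 e.2) p := by
    rw [← hS₀, ← hσ]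
    simp [ψ, Polynomial.coeff_zero_eq_eval_zero]
  have hψQ : ψ Q * (ψ Q)⁻¹ = 1 := PowerSeries.mul_inv_cancel _ (by rwa [hψ₀])
  refine ⟨(ψ Q)⁻¹ • ψ.mapMatrix P, ?_, fun u v h => by simp [hPD u v h], fun v w hvw hB => ?_⟩
  · ext u v
    simp [hψ₀, hP₀]
  · have hzero : σ (((Q • 1 - P)ᵀ * mvPolynomialX V V ℝ * (Q • 1 - P) :
        Matrix V V (MvPolynomial (V × V) ℝ)) v w) = 0 := by
      refine Polynomial.eq_zero_of_infinite_isRoot _ (hS.mono fun s hs => ?_)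
      rw [Set.mem_ofPred_eq, Polynomial.IsRoot, hσ]
      exact hs _ (hrel v w hvw hB)
    have hN : 1 - (ψ Q)⁻¹ • ψ.mapMatrix P = (ψ Q)⁻¹ • ψ.mapMatrix (Q • 1 - P) := by
      ext1 i j
      simp only [RingHom.mapMatrix_apply, map_apply, Matrix.sub_apply, Matrix.smul_apply,
        smul_eq_mul, map_sub, map_mul, mul_sub, ← mul_assoc, mul_comm _ (ψ Q), hψQ, one_apply]
      split_ifs <;> simp
    have hX : Polynomial.coeToPowerSeries.ringHom.mapMatrix S =
        ψ.mapMatrix (mvPolynomialX V V ℝ) := by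
      ext1 i j
      simp [ψ, σ]
    have hNT : (ψ.mapMatrix (Q • 1 - P))ᵀ = ψ.mapMatrix (Q • 1 - P)ᵀ := rfl
    have hψ : ψ.mapMatrix ((Q • 1 - P)ᵀ * mvPolynomialX V V ℝ * (Q • 1 - P)) v w = 0 := by
      change Polynomial.coeToPowerSeries.ringHom (σ _) = 0
      rw [hzero, map_zero]
    rw [hN, hX, transpose_smul, hNT, Matrix.smul_mul, Matrix.smul_mul, Matrix.mul_smul,
      ← map_mul, ← map_mul, Matrix.smul_apply, Matrix.smul_apply, hψ, smul_zero, smul_zero]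

end MixedGraph

section coefficients

variable {V : Type*} [Fintype V] (M N : Matrix V V (PowerSeries ℝ))

lemma map_coeff_zero_mul : (M * N).map (PowerSeries.coeff 0) =
    M.map (PowerSeries.coeff 0) * N.map (PowerSeries.coeff 0) := by
  ext i j
  simp [mul_apply]

lemma map_coeff_one_mul : (M * N).map (PowerSeries.coeff 1) =
    M.map (PowerSeries.coeff 0) * N.map (PowerSeries.coeff 1) +
      M.map (PowerSeries.coeff 1) * N.map (PowerSeries.coeff 0) := by
  ext i j
  simp [mul_apply, PowerSeries.coeff_mul, Finset.Nat.antidiagonal_succ, Finset.sum_add_distrib]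

lemma map_coeff_two_mul : (M * N).map (PowerSeries.coeff 2) =
    M.map (PowerSeries.coeff 0) * N.map (PowerSeries.coeff 2) +
      M.map (PowerSeries.coeff 1) * N.map (PowerSeries.coeff 1) +
      M.map (PowerSeries.coeff 2) * N.map (PowerSeries.coeff 0) := by
  ext i j
  simp [mul_apply, PowerSeries.coeff_mul, Finset.Nat.antidiagonal_succ, Finset.sum_add_distrib,
    add_assoc]

end coefficients

namespace MixedGraph

variable {V : Type*} {G G' : MixedGraph V} [Fintype V] [DecidableEq V]

open Classical in
/-- First and second order conditions at the identity matrix for formal curves lifting to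
parameters of `G`. -/
lemma IsBAP.second_order (hG : G.IsBAP) {S Λ : Matrix V V (PowerSeries ℝ)}
    (hS₀ : S.map (PowerSeries.coeff 0) = 1) (hΛ₀ : Λ.map (PowerSeries.coeff 0) = 0)
    (hΛD : ∀ u v, ¬ G.D u v → Λ u v = 0)
    (hrel : ∀ v w, v ≠ w → ¬ G.B v w →
      ((1 - Λ)ᵀ * S * (1 - Λ) : Matrix V V (PowerSeries ℝ)) v w = 0)
    {S₁ L : Matrix V V ℝ} (hS₁ : S.map (PowerSeries.coeff 1) = S₁)
    (hL : L = of fun x y => if G.D x y then S₁ x y else 0)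
    {a b : V} (hab : a ≠ b) (hadj : ¬ G.adj a b) :
    S₁ a b = 0 ∧
      S.map (PowerSeries.coeff 2) a b = (Lᵀ * S₁ + S₁ * L - Lᵀ * L) a b := by
  have hexp : (1 - Λ)ᵀ * S * (1 - Λ) = S - Λᵀ * S - S * Λ + Λᵀ * S * Λ := by
    rw [transpose_sub, transpose_one]
    noncomm_ring
  have hsub (k : ℕ) (M N : Matrix V V (PowerSeries ℝ)) : (M - N).map (PowerSeries.coeff k) =
      M.map (PowerSeries.coeff k) - N.map (PowerSeries.coeff k) := by
    ext; simp
  have hadd (k : ℕ) (M N : Matrix V V (PowerSeries ℝ)) : (M + N).map (PowerSeries.coeff k) =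
      M.map (PowerSeries.coeff k) + N.map (PowerSeries.coeff k) := by
    ext; simp
  have hc (k : ℕ) (v w : V) (hvw : v ≠ w) (hB : ¬ G.B v w) :
      (S - Λᵀ * S - S * Λ + Λᵀ * S * Λ).map (PowerSeries.coeff k) v w = 0 := by
    rw [← hexp, map_apply, hrel v w hvw hB, map_zero]
  have hD (k : ℕ) (u v : V) (h : ¬ G.D u v) : Λ.map (PowerSeries.coeff k) u v = 0 := by
    rw [map_apply, hΛD u v h, map_zero]
  have h₁ (v w : V) (hvw : v ≠ w) (hB : ¬ G.B v w) :
      S₁ v w = Λ.map (PowerSeries.coeff 1) w v + Λ.map (PowerSeries.coeff 1) v w := by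
    have := hc 1 v w hvw hB
    simp only [hadd, hsub, map_coeff_one_mul, map_coeff_zero_mul, transpose_map, hΛ₀, hS₀, hS₁,
      transpose_zero, Matrix.zero_mul, Matrix.mul_zero, Matrix.mul_one, Matrix.one_mul,
      zero_add, add_zero, Matrix.add_apply, Matrix.sub_apply, transpose_apply,
      Matrix.zero_apply] at this
    linarith
  have hΛ₁ : Λ.map (PowerSeries.coeff 1) = L := by
    ext x y
    rw [hL, of_apply]
    split_ifs with h
    · rw [h₁ x y (hG.1.ne_of_D h) (hG.not_B_of_D h), hD 1 y x (hG.not_D_of_D h), zero_add]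
    · exact hD 1 x y h
  have hnab : ¬ G.D a b := fun h => hadj ⟨hab, .inl h⟩
  have hnba : ¬ G.D b a := fun h => hadj ⟨hab, .inr (.inl h)⟩
  have hnB : ¬ G.B a b := fun h => hadj ⟨hab, .inr (.inr h)⟩
  refine ⟨by rw [h₁ a b hab hnB, hD 1 _ _ hnab, hD 1 _ _ hnba, add_zero], ?_⟩
  have := hc 2 a b hab hnB
  simp only [hadd, hsub, map_coeff_two_mul, map_coeff_one_mul, map_coeff_zero_mul,
    transpose_map, hΛ₀, hS₀, hS₁, hΛ₁,
    transpose_zero, Matrix.zero_mul, Matrix.mul_zero, Matrix.mul_one, Matrix.one_mul,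
    zero_add, add_zero, Matrix.add_apply, Matrix.sub_apply, transpose_apply, hD 2 _ _ hnab,
    hD 2 _ _ hnba] at this
  simp only [Matrix.add_apply, Matrix.sub_apply]
  linarith

/-- The polynomial curve `(1 + s L)ᵀ (1 + s W) (1 + s L)`. -/
noncomputable def curve (L W : Matrix V V ℝ) : Matrix V V (Polynomial ℝ) :=
  (1 + (Polynomial.X : Polynomial ℝ) • L.map Polynomial.C)ᵀ *
    (1 + (Polynomial.X : Polynomial ℝ) • W.map Polynomial.C) *
    (1 + (Polynomial.X : Polynomial ℝ) • L.map Polynomial.C)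

lemma curve_map_eval (L W : Matrix V V ℝ) (s : ℝ) :
    (curve L W).map (Polynomial.eval s) = (1 + s • L)ᵀ * (1 + s • W) * (1 + s • L) := by
  have h (A : Matrix V V ℝ) : (Polynomial.evalRingHom s).mapMatrix
      (1 + (Polynomial.X : Polynomial ℝ) • A.map Polynomial.C) = 1 + s • A := by
    rw [map_add, map_one]
    congr 1
    ext
    simp [mul_comm s]
  have hT (A : Matrix V V (Polynomial ℝ)) : (Polynomial.evalRingHom s).mapMatrix Aᵀ =
      ((Polynomial.evalRingHom s).mapMatrix A)ᵀ := rfl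
  change (Polynomial.evalRingHom s).mapMatrix _ = _
  rw [curve, map_mul, map_mul, hT, h, h]

lemma curve_coeff_one_two (L W : Matrix V V ℝ) :
    (Polynomial.coeToPowerSeries.ringHom.mapMatrix (curve L W)).map (PowerSeries.coeff 0) = 1 ∧
    (Polynomial.coeToPowerSeries.ringHom.mapMatrix (curve L W)).map (PowerSeries.coeff 1) =
      Lᵀ + W + L ∧
    (Polynomial.coeToPowerSeries.ringHom.mapMatrix (curve L W)).map (PowerSeries.coeff 2) =
      Lᵀ * W + (Lᵀ + W) * L := by
  let φ : Matrix V V (Polynomial ℝ) →+* Matrix V V (PowerSeries ℝ) :=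
    Polynomial.coeToPowerSeries.ringHom.mapMatrix
  have hT (A : Matrix V V (Polynomial ℝ)) : φ Aᵀ = (φ A)ᵀ := rfl
  have h₀ (A : Matrix V V ℝ) : (φ (1 + (Polynomial.X : Polynomial ℝ) •
      A.map Polynomial.C)).map (PowerSeries.coeff 0) = 1 := by
    rw [map_add, map_one]
    ext i j
    simp [φ, one_apply, apply_ite]
  have h₁ (A : Matrix V V ℝ) : (φ (1 + (Polynomial.X : Polynomial ℝ) •
      A.map Polynomial.C)).map (PowerSeries.coeff 1) = A := by
    rw [map_add, map_one]
    ext i j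
    simp [φ, one_apply, apply_ite, PowerSeries.coeff_one]
  have h₂ (A : Matrix V V ℝ) : (φ (1 + (Polynomial.X : Polynomial ℝ) •
      A.map Polynomial.C)).map (PowerSeries.coeff 2) = 0 := by
    rw [map_add, map_one]
    ext i j
    simp [φ, one_apply, apply_ite, PowerSeries.coeff_one]
  change (φ _).map _ = _ ∧ (φ _).map _ = _ ∧ (φ _).map _ = _
  simp only [curve, map_mul, hT, map_coeff_two_mul, map_coeff_one_mul, map_coeff_zero_mul,
    transpose_map, h₀, h₁, h₂]
  simp [add_comm]

open Classical in
/-- Comparison of second order jets at the identity: a symmetric weighting `c` of the edges of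
`G` defines a curve in the model of `G`, which must be tangent to second order to the
model of `G'`. -/
lemma jet_conditions (hG : G.IsBAP) (hG' : G'.IsBAP) (hsub : G.model ⊆ G'.algModel)
    {c L W C L' : Matrix V V ℝ} (hc : c.IsSymm)
    (hL : L = of fun x y => if G.D x y then c x y else 0)
    (hW : W = of fun x y => if G.B x y then c x y else 0)
    (hC : C = of fun x y => if G.adj x y then c x y else 0)
    (hL' : L' = of fun x y => if G'.D x y then C x y else 0)
    (hLL : L * L = 0) {a b : V} (hab : a ≠ b) (hadj : ¬ G'.adj a b) :
    C a b = 0 ∧ (Lᵀ * W + (Lᵀ + W) * L) a b = (L'ᵀ * C + C * L' - L'ᵀ * L') a b := by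
  have hWsymm : W.IsSymm := by
    ext x y
    simp only [hW, transpose_apply, of_apply, hc.apply,
      show G.B y x ↔ G.B x y from ⟨G.symm _ _, G.symm _ _⟩]
  have hmem (s : ℝ) (hs : |s| * ∑ i, ∑ j, |W i j| < 1) :
      (curve L W).map (Polynomial.eval s) ∈ G'.algModel := by
    refine hsub ⟨s • L, 1 + s • W, ?_, ⟨posDef_one_add_smul hWsymm hs, ?_⟩, ?_⟩
    · intro v w h
      simp [hL, h]
    · intro v w hvw h _
      simp [hW, h, hvw]
    · have hinv : (1 - s • L)⁻¹ = 1 + s • L := by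
        refine inv_eq_right_inv ?_
        simp [Matrix.sub_mul, Matrix.mul_add, hLL]
      rw [hinv, curve_map_eval]
  have hinf : {s : ℝ | (curve L W).map (Polynomial.eval s) ∈ G'.algModel}.Infinite := by
    have hpos : 0 < 1 / (1 + ∑ i, ∑ j, |W i j|) := by positivity
    refine (Set.Ioo_infinite hpos).mono fun s hs => hmem s ?_
    have hnn : 0 ≤ ∑ i, ∑ j, |W i j| := by positivity
    have := (lt_div_iff₀ (by positivity)).1 hs.2
    rw [abs_of_pos hs.1]
    nlinarith [hs.1]
  obtain ⟨Λ, hΛ₀, hΛD, hrel⟩ := hG'.exists_formal_lift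
    (by simp [curve_map_eval]) hinf
  obtain ⟨h₀, h₁, h₂⟩ := curve_coeff_one_two L W
  have hCsum : Lᵀ + W + L = C := by
    ext x y
    simp only [hL, hW, hC, Matrix.add_apply, transpose_apply, of_apply, hc.apply]
    by_cases hxy : x = y
    · subst hxy
      simp [hG.1.not_D_self, G.irrefl, adj]
    · have := hG.2 x y hxy
      by_cases h1 : G.D x y <;> by_cases h2 : G.D y x <;> by_cases h3 : G.B x y <;>
        simp_all [adj]
  rw [hCsum] at h₁
  rw [← h₂]
  exact hG'.second_order h₀ hΛ₀ hΛD hrel h₁ hL' hab hadj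

lemma adj_of_model_subset (hG : G.IsBAP) (hG' : G'.IsBAP) (hsub : G.model ⊆ G'.algModel)
    {a b : V} (h : G.adj a b) : G'.adj a b := by
  classical
  by_contra hadj
  let c : Matrix V V ℝ := of fun x y => if s(x, y) = s(a, b) then 1 else 0
  have hc : c.IsSymm := by
    ext x y
    simp only [c, transpose_apply, of_apply, Sym2.eq_swap (a := y)]
  have := (jet_conditions hG hG' hsub hc rfl rfl rfl rfl ?_ h.1 hadj).1
  · simp [c, h] at this
  · ext x y
    rw [mul_apply]
    refine Finset.sum_eq_zero fun z _ => ?_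
    simp only [c, of_apply]
    split_ifs with h1 h2 h3 h4 <;> try simp
    have := hG.not_D_of_D h1
    grind [Sym2.eq_iff]

lemma vStructure_of_model_subset (hG : G.IsBAP) (hG' : G'.IsBAP)
    (hsub : G.model ⊆ G'.algModel) (hskel : ∀ v w, G.adj v w ↔ G'.adj v w) {u v w : V}
    (h : G.VStructure u v w) : G'.VStructure u v w := by
  classical
  obtain ⟨⟨huv, hvw, huw, hu, hw⟩, hnadj⟩ := h
  have hnvu : ¬ G.D v u := fun h => by
    have := hG.2 u v huv
    tauto
  have hnvw : ¬ G.D v w := fun h => by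
    have := hG.2 w v hvw.symm
    tauto
  have hauv : G.adj u v := ⟨huv, by tauto⟩
  have hawv : G.adj w v := ⟨hvw.symm, by tauto⟩
  let c : Matrix V V ℝ := of fun x y => if s(x, y) = s(u, v) ∨ s(x, y) = s(w, v) then 1 else 0
  have hc : c.IsSymm := by
    ext x y
    simp only [c, transpose_apply, of_apply, Sym2.eq_swap (a := y)]
  let L : Matrix V V ℝ := of fun x y => if G.D x y then c x y else 0
  let W : Matrix V V ℝ := of fun x y => if G.B x y then c x y else 0
  let C : Matrix V V ℝ := of fun x y => if G.adj x y then c x y else 0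
  let L' : Matrix V V ℝ := of fun x y => if G'.D x y then C x y else 0
  have hL (x y : V) (hy : y ≠ v) : L x y = 0 := by
    simp only [L, c, of_apply]
    split_ifs with h1 h2 <;> try rfl
    grind [Sym2.eq_iff]
  have hLv (y : V) : L v y = 0 := by
    by_cases hy : y = v
    · simp [L, hy, hG.1.not_D_self]
    · exact hL v y hy
  have hLL : L * L = 0 := by
    ext x y
    rw [mul_apply]
    refine Finset.sum_eq_zero fun z _ => ?_
    by_cases hz : z = v
    · rw [hz, hLv, mul_zero]
    · rw [hL x z hz, zero_mul]
  have hCu (x : V) (hx : x ≠ v) : C u x = 0 := by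
    simp only [C, c, of_apply]
    split_ifs with h1 h2 <;> try rfl
    grind [Sym2.eq_iff]
  have hCw (x : V) (hx : x ≠ v) : C x w = 0 := by
    simp only [C, c, of_apply]
    split_ifs with h1 h2 <;> try rfl
    grind [Sym2.eq_iff]
  have hL'w (x : V) (hx : x ≠ v) : L' x w = 0 := by
    simp [L', hCw x hx]
  have hjet := (jet_conditions hG hG' hsub hc (rfl : L = _) (rfl : W = _) (rfl : C = _)
    (rfl : L' = _) hLL huw (by rwa [← hskel])).2
  have hleft : (Lᵀ * W + (Lᵀ + W) * L) u w = 0 := by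
    simp [mul_apply, hL _ u huv, hL _ w hvw.symm]
  have hCuv : C u v = 1 := by simp [C, c, hauv]
  have hCvu : C v u = 1 := by simp [C, c, adj_comm.1 hauv, Sym2.eq_swap]
  have hCvw : C v w = 1 := by simp [C, c, adj_comm.1 hawv, Sym2.eq_swap]
  have hright : (L'ᵀ * C + C * L' - L'ᵀ * L') u w = L' v u + L' v w - L' v u * L' v w := by
    simp only [Matrix.sub_apply, Matrix.add_apply, mul_apply, transpose_apply]
    rw [Finset.sum_eq_single v, Finset.sum_eq_single v, Finset.sum_eq_single v, hCuv, hCvw,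
      mul_one, one_mul]
    all_goals simp +contextual [hCw, hCu, hL'w]
  rw [hleft, hright] at hjet
  simp only [L', of_apply, hCvu, hCvw] at hjet
  have hvu' : ¬ G'.D v u := fun h => by
    simp [h] at hjet
  have hvw' : ¬ G'.D v w := fun h => by
    simp [h] at hjet
  have h1 := ((hskel u v).1 hauv).2
  have h2 := ((hskel w v).1 hawv).2
  exact ⟨⟨huv, hvw, huw, by tauto, by tauto⟩, by rwa [← hskel]⟩

lemma model_subset_algModel : G.model ⊆ G.algModel := fun T hT _ hp => hp T hT

end MixedGraph

/-- Corollary 1: Two algebraically equivalent BAPs have the same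
skeleton and the same v-structures. -/
theorem skeleton_and_vStructures_eq_of_algModel_eq
    {V : Type*} [Fintype V] [DecidableEq V]
    (G G' : MixedGraph V) (hG : G.IsBAP) (hG' : G'.IsBAP)
    (heq : G.algModel = G'.algModel) :
    (∀ v w, G.adj v w ↔ G'.adj v w) ∧
    (∀ u v w, G.VStructure u v w ↔ G'.VStructure u v w) := by
  have h : G.model ⊆ G'.algModel := heq ▸ MixedGraph.model_subset_algModel
  have h' : G'.model ⊆ G.algModel := heq ▸ MixedGraph.model_subset_algModel
  have hskel (v w : V) : G.adj v w ↔ G'.adj v w :=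
    ⟨MixedGraph.adj_of_model_subset hG hG' h, MixedGraph.adj_of_model_subset hG' hG h'⟩
  exact ⟨hskel, fun u v w => ⟨MixedGraph.vStructure_of_model_subset hG hG' h hskel,
    MixedGraph.vStructure_of_model_subset hG' hG h' fun v w => (hskel v w).symm⟩⟩
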